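/- Let L ⊆ Σ^ω be a monitorable deterministic ω-regular language accepted by a deterministic Büchi automaton with total transition function and n states. Then: (i) there exists a deterministic Büchi monitor for L with at most n states; and (ii) every deterministic Büchi monitor for L has at least as many states as the number of distinct quotients in {L(x) : x ∈ Σ*}. -/

import Mathlib

/-!
Everything is phrased through the languages `dlang d F q` accepted from the individual states `q`
of a complete deterministic Büchi automaton. The basic fact is that the quotient of the language by
`x` is the language of the state reached on `x` (`cat_mem_dlang`). Part (ii) is immediate from it:
distinct quotients need distinct states.

For part (i), restrict the automaton to its reachable states. A monitor for `L` shows that from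
each of them some state with a trivial language (empty or full) can be reached. Now merge all states
with empty language into one and all states with full language into another; this is done by a map
`rep` to representatives, which preserves state languages and commutes with transitions
(`rep_step`). The merged states are absorbing, since quotients of trivial languages are trivial, and
they serve as `⊥` and `⊤`. The final states are the old ones with nonempty language, together with
`⊤`. A run that visits `⊤` is accepting in both automata, an accepted run never meets an
empty-language state, and at all other states the two automata agree, so the language is unchanged
(`dlang_repStep`). The resulting monitor is assembled in `exists_monitor`.
-/

/-- Concatenation of a finite word with an infinite word. -/
def cat {A : Type*} (x : List A) (α : ℕ → A) : ℕ → A :=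
  fun n => if h : n < x.length then x[n] else α (n - x.length)

/-- A monitor: a finite deterministic transition system with designated
absorbing states `⊥` (bot) and `⊤` (top), at least one of which is present,
such that from every state some present sink is reachable. -/
structure Monitor (A : Type*) where
  Q : Type
  finQ : Finite Q
  δ : Q → A → Q
  init : Q
  bot : Option Q
  top : Option Q
  sink_exists : bot.isSome ∨ top.isSome
  bot_ne_top : ∀ p q, bot = some p → top = some q → p ≠ q
  bot_absorb : ∀ p a, bot = some p → δ p a = p
  top_absorb : ∀ p a, top = some p → δ p a = p
  reach : ∀ q : Q, ∃ w : List A, bot = some (w.foldl δ q) ∨ top = some (w.foldl δ q)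

/-- `M` is a monitor for the language `L ⊆ Σ^ω`: whenever the run from the
initial state on a finite word `u` reaches `⊥` then `uΣ^ω ∩ L = ∅`, and
whenever it reaches `⊤` then `uΣ^ω ⊆ L`. -/
def Monitor.IsMonitorFor {A : Type*} (M : Monitor A) (L : Set (ℕ → A)) : Prop :=
  ∀ u : List A,
    (M.bot = some (u.foldl M.δ M.init) → ∀ α, cat u α ∉ L) ∧
    (M.top = some (u.foldl M.δ M.init) → ∀ α, cat u α ∈ L)

/-- A language is monitorable if some monitor for it exists. -/
def Monitorable {A : Type*} (L : Set (ℕ → A)) : Prop :=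
  ∃ M : Monitor A, M.IsMonitorFor L

/-- The quotient `L(x) = {α : xα ∈ L}`. -/
def quotientBy {A : Type*} (L : Set (ℕ → A)) (x : List A) : Set (ℕ → A) :=
  {α | cat x α ∈ L}

/-- Deterministic Büchi automaton: partial transition function, unique initial state. -/
structure DBA (A : Type*) where
  Q : Type
  finQ : Finite Q
  δ : Q → A → Option Q
  init : Q
  F : Set Q

/-- `D` accepts `α` if the run on `α` from the initial state is infinite and
visits `F` infinitely often. -/
def DBA.Accepts {A : Type*} (D : DBA A) (α : ℕ → A) : Prop :=
  ∃ ρ : ℕ → D.Q, ρ 0 = D.init ∧ (∀ n, D.δ (ρ n) (α n) = some (ρ (n + 1))) ∧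
    ∀ n, ∃ m, n ≤ m ∧ ρ m ∈ D.F

def DBA.Lang {A : Type*} (D : DBA A) : Set (ℕ → A) := {α | D.Accepts α}

/-! ### State languages of complete automata -/

/-- The run of the complete transition function `d` from `q` on `α`. -/
def drun {A Q : Type*} (d : Q → A → Q) (q : Q) (α : ℕ → A) : ℕ → Q
  | 0 => q
  | n + 1 => d (drun d q α n) (α n)

/-- The Büchi language accepted from the state `q`. -/
def dlang {A Q : Type*} (d : Q → A → Q) (F : Set Q) (q : Q) : Set (ℕ → A) :=
  {α | ∀ n, ∃ m, n ≤ m ∧ drun d q α m ∈ F}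

lemma lang_eq_dlang {A : Type*} (D : DBA A) (d : D.Q → A → D.Q)
    (h : ∀ q a, D.δ q a = some (d q a)) : D.Lang = dlang d D.F D.init := by
  ext α
  constructor
  · rintro ⟨ρ, h0, hs, hF⟩
    have key : ∀ n, ρ n = drun d D.init α n := by
      intro n
      induction n with
      | zero => exact h0
      | succ n ih =>
        have := hs n
        rw [h, Option.some.injEq] at this
        rw [← this, ih, drun]
    intro n
    obtain ⟨m, hm, hf⟩ := hF n
    exact ⟨m, hm, key m ▸ hf⟩
  · intro hα
    exact ⟨drun d D.init α, rfl, fun n => h _ _, hα⟩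

lemma drun_succ {A Q : Type*} (d : Q → A → Q) (q : Q) (α : ℕ → A) (n : ℕ) :
    drun d q α (n + 1) = drun d (d q (α 0)) (fun k => α (k + 1)) n := by
  induction n with
  | zero => rfl
  | succ n ih => rw [drun, ih, drun]

lemma mem_dlang_step {A Q : Type*} (d : Q → A → Q) (F : Set Q) (q : Q) (α : ℕ → A) :
    α ∈ dlang d F q ↔ (fun k => α (k + 1)) ∈ dlang d F (d q (α 0)) := by
  constructor
  · intro h n
    obtain ⟨m, hm, hf⟩ := h (n + 1)
    obtain ⟨k, rfl⟩ : ∃ k, m = k + 1 := ⟨m - 1, by omega⟩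
    exact ⟨k, by omega, drun_succ d q α k ▸ hf⟩
  · intro h n
    obtain ⟨m, hm, hf⟩ := h n
    exact ⟨m + 1, by omega, (drun_succ d q α m).symm ▸ hf⟩

lemma cat_nil {A : Type*} (α : ℕ → A) : cat [] α = α := by
  ext n; simp [cat]

lemma cat_cons_zero {A : Type*} (a : A) (x : List A) (α : ℕ → A) : cat (a :: x) α 0 = a := by
  simp [cat]

lemma cat_cons_succ {A : Type*} (a : A) (x : List A) (α : ℕ → A) :
    (fun k => cat (a :: x) α (k + 1)) = cat x α := by
  ext n; simp [cat]

/-- The quotient by `x` of the language of `q` is the language of the state reached on `x`. -/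
lemma cat_mem_dlang {A Q : Type*} (d : Q → A → Q) (F : Set Q) (x : List A) (q : Q) (α : ℕ → A) :
    cat x α ∈ dlang d F q ↔ α ∈ dlang d F (x.foldl d q) := by
  induction x generalizing q with
  | nil => rw [cat_nil]; rfl
  | cons a x ih => rw [mem_dlang_step, cat_cons_zero, cat_cons_succ, ih]; rfl

lemma mem_dlang_shift {A Q : Type*} (d : Q → A → Q) (F : Set Q) (q : Q) (α : ℕ → A) (n : ℕ) :
    α ∈ dlang d F q ↔ (fun k => α (k + n)) ∈ dlang d F (drun d q α n) := by
  induction n with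
  | zero => rfl
  | succ n ih =>
    rw [ih, mem_dlang_step]
    simp only [Nat.zero_add, drun, Nat.add_right_comm, Nat.add_assoc]

lemma dlang_step_congr {A Q : Type*} (d : Q → A → Q) (F : Set Q) {p q : Q}
    (h : dlang d F p = dlang d F q) (a : A) : dlang d F (d p a) = dlang d F (d q a) := by
  ext α
  have hp := cat_mem_dlang d F [a] p α
  have hq := cat_mem_dlang d F [a] q α
  rw [h] at hp
  exact hp.symm.trans hq

/-- A state is trivial if its language is empty or full. -/
def Triv {A Q : Type*} (d : Q → A → Q) (F : Set Q) (q : Q) : Prop :=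
  dlang d F q = ∅ ∨ dlang d F q = Set.univ

/-- Quotients of the empty language are empty, and quotients of the full language are full. -/
lemma Triv.dlang_step {A Q : Type*} {d : Q → A → Q} {F : Set Q} {q : Q} (h : Triv d F q) (a : A) :
    dlang d F (d q a) = dlang d F q := by
  ext α
  have key := cat_mem_dlang d F [a] q α
  rcases h with h | h <;> rw [h] at key ⊢ <;> exact key.symm

lemma Triv.step {A Q : Type*} {d : Q → A → Q} {F : Set Q} {q : Q} (h : Triv d F q) (a : A) :
    Triv d F (d q a) := by
  unfold Triv
  rw [h.dlang_step a]
  exact h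

/-! ### Merging the trivial states -/

open Classical in
/-- The representative of `q` after merging trivial states of equal language; nontrivial states
represent themselves. -/
noncomputable def rep {A Q : Type*} (d : Q → A → Q) (F : Set Q) (q : Q) : Q :=
  if Triv d F q then @Classical.epsilon Q ⟨q⟩ (fun p => dlang d F p = dlang d F q) else q

lemma rep_of_not {A Q : Type*} {d : Q → A → Q} {F : Set Q} {q : Q} (h : ¬ Triv d F q) :
    rep d F q = q := if_neg h

lemma dlang_rep {A Q : Type*} (d : Q → A → Q) (F : Set Q) (q : Q) :
    dlang d F (rep d F q) = dlang d F q := by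
  unfold rep
  split_ifs
  · exact Classical.epsilon_spec (p := fun p => dlang d F p = dlang d F q) ⟨q, rfl⟩
  · rfl

lemma rep_congr {A Q : Type*} {d : Q → A → Q} {F : Set Q} {p q : Q} (hq : Triv d F q)
    (h : dlang d F p = dlang d F q) : rep d F p = rep d F q := by
  have hp : Triv d F p := by unfold Triv; rw [h]; exact hq
  simp only [rep, if_pos hp, if_pos hq, h]

lemma rep_rep {A Q : Type*} (d : Q → A → Q) (F : Set Q) (q : Q) :
    rep d F (rep d F q) = rep d F q := by
  by_cases h : Triv d F q
  · exact rep_congr h (dlang_rep d F q)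
  · rw [rep_of_not h, rep_of_not h]

lemma rep_step {A Q : Type*} (d : Q → A → Q) (F : Set Q) (q : Q) (a : A) :
    rep d F (d (rep d F q) a) = rep d F (d q a) := by
  by_cases h : Triv d F q
  · exact rep_congr (h.step a) (dlang_step_congr d F (dlang_rep d F q) a)
  · rw [rep_of_not h]

/-- The transition function on representatives. -/
noncomputable def repStep {A Q : Type*} (d : Q → A → Q) (F : Set Q)
    (q : {q : Q // rep d F q = q}) (a : A) : {q : Q // rep d F q = q} :=
  ⟨rep d F (d q.1 a), rep_rep d F _⟩

/-- Merging commutes with reading a finite word. -/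
lemma repStep_foldl {A Q : Type*} (d : Q → A → Q) (F : Set Q) (w : List A) (q : Q) :
    w.foldl (repStep d F) ⟨rep d F q, rep_rep d F q⟩ =
      ⟨rep d F (w.foldl d q), rep_rep d F _⟩ := by
  induction w generalizing q with
  | nil => rfl
  | cons a w ih =>
    have : repStep d F ⟨rep d F q, rep_rep d F q⟩ a = ⟨rep d F (d q a), rep_rep d F _⟩ :=
      Subtype.ext (rep_step d F q a)
    rw [List.foldl_cons, this, ih]
    rfl

lemma repStep_drun {A Q : Type*} (d : Q → A → Q) (F : Set Q) (q : Q) (α : ℕ → A) (n : ℕ) :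
    (drun (repStep d F) ⟨rep d F q, rep_rep d F q⟩ α n).1 = rep d F (drun d q α n) := by
  induction n with
  | zero => rfl
  | succ n ih =>
    simp only [drun, repStep]
    rw [ih, rep_step]

/-- The final states of the merged automaton: states with full language, and final states of the
original automaton with nonempty language. -/
def repFinal {A Q : Type*} (d : Q → A → Q) (F : Set Q) : Set {q : Q // rep d F q = q} :=
  {p | dlang d F p.1 = Set.univ ∨ (p.1 ∈ F ∧ dlang d F p.1 ≠ ∅)}

/-- Merging trivial states does not change the language. -/
lemma dlang_repStep {A Q : Type*} (d : Q → A → Q) (F : Set Q) (q : Q) :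
    dlang (repStep d F) (repFinal d F) ⟨rep d F q, rep_rep d F q⟩ = dlang d F q := by
  ext α
  constructor
  · intro h
    by_cases hu : ∃ m, dlang d F (drun d q α m) = Set.univ
    · obtain ⟨m, hm⟩ := hu
      rw [mem_dlang_shift d F q α m, hm]
      trivial
    · intro n
      obtain ⟨m, hm, hf⟩ := h n
      refine ⟨m, hm, ?_⟩
      simp only [repFinal, Set.mem_ofPred_eq, repStep_drun, dlang_rep] at hf
      rcases hf with hf | ⟨hf, hne⟩
      · exact absurd ⟨m, hf⟩ hu
      · rwa [rep_of_not] at hf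
        rintro (h1 | h1)
        · exact hne h1
        · exact hu ⟨m, h1⟩
  · intro h n
    obtain ⟨m, hm, hf⟩ := h n
    refine ⟨m, hm, ?_⟩
    simp only [repFinal, Set.mem_ofPred_eq, repStep_drun, dlang_rep]
    have hne : dlang d F (drun d q α m) ≠ ∅ :=
      Set.nonempty_iff_ne_empty.mp ⟨_, (mem_dlang_shift d F q α m).mp h⟩
    by_cases hu : dlang d F (drun d q α m) = Set.univ
    · exact Or.inl hu
    · refine Or.inr ⟨?_, hne⟩
      rwa [rep_of_not]
      rintro (h1 | h1)
      · exact hne h1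
      · exact hu h1

/-! ### The monitor on merged states -/

open Classical in
/-- Some element satisfying `P`, if there is one. -/
noncomputable def pick {X : Type*} (P : X → Prop) : Option X :=
  if h : ∃ x, P x then some h.choose else none

lemma pick_eq_some {X : Type*} {P : X → Prop} (hP : ∀ x y, P x → P y → x = y) (x : X) :
    pick P = some x ↔ P x := by
  unfold pick
  split_ifs with h
  · rw [Option.some.injEq]
    exact ⟨fun e => e ▸ h.choose_spec, fun hx => hP _ _ h.choose_spec hx⟩
  · exact ⟨fun e => by simp at e, fun hx => absurd ⟨x, hx⟩ h⟩

/-- If every state can reach a trivial one, then merging the trivial states gives a monitor. -/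
lemma exists_monitor {A : Type*} {Q : Type} [Finite Q] (d : Q → A → Q) (F : Set Q) (q₀ : Q)
    (hreach : ∀ q, ∃ w : List A, Triv d F (w.foldl d q)) :
    ∃ (M : Monitor A) (F' : Set M.Q), M.IsMonitorFor (dlang d F q₀) ∧
      dlang M.δ F' M.init = dlang d F q₀ ∧ Nat.card M.Q ≤ Nat.card Q := by
  -- A full-language state counts as `⊤` only if it is not already `⊥`; over an empty alphabet
  -- the empty and the full language coincide.
  set isBot : {q : Q // rep d F q = q} → Prop := fun p => dlang d F p.1 = ∅ with hB
  set isTop : {q : Q // rep d F q = q} → Prop :=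
    fun p => dlang d F p.1 = Set.univ ∧ dlang d F p.1 ≠ ∅ with hT
  have uniq : ∀ p q : {q : Q // rep d F q = q}, Triv d F q.1 →
      dlang d F p.1 = dlang d F q.1 → p = q := fun p q ht he =>
    Subtype.ext (by rw [← p.2, ← q.2]; exact rep_congr ht he)
  have hbot : ∀ p, pick isBot = some p ↔ isBot p :=
    pick_eq_some fun p q hp hq => uniq p q (Or.inl hq) (hp.trans hq.symm)
  have htop : ∀ p, pick isTop = some p ↔ isTop p :=
    pick_eq_some fun p q hp hq => uniq p q (Or.inr hq.1) (hp.1.trans hq.1.symm)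
  have step : ∀ (p : {q : Q // rep d F q = q}) a, Triv d F p.1 → repStep d F p a = p :=
    fun p a ht => uniq _ _ ht ((dlang_rep d F _).trans (ht.dlang_step a))
  have hre : ∀ p : {q : Q // rep d F q = q}, ∃ w : List A,
      pick isBot = some (w.foldl (repStep d F) p) ∨
      pick isTop = some (w.foldl (repStep d F) p) := by
    rintro ⟨q, hq⟩
    obtain ⟨w, hw⟩ := hreach q
    refine ⟨w, ?_⟩
    have e : (⟨q, hq⟩ : {q : Q // rep d F q = q}) = ⟨rep d F q, rep_rep d F q⟩ :=
      Subtype.ext hq.symm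
    rw [hbot, htop, e, repStep_foldl]
    simp only [hB, hT, dlang_rep]
    by_cases h0 : dlang d F (w.foldl d q) = ∅
    · exact Or.inl h0
    · exact Or.inr ⟨hw.resolve_left h0, h0⟩
  refine ⟨⟨{q : Q // rep d F q = q}, inferInstance, repStep d F,
    ⟨rep d F q₀, rep_rep d F q₀⟩, pick isBot, pick isTop, ?_, ?_, ?_, ?_, hre⟩,
    repFinal d F, ?_, dlang_repStep d F q₀, ?_⟩
  · obtain ⟨w, hw | hw⟩ := hre ⟨rep d F q₀, rep_rep d F q₀⟩
    · exact Or.inl (by rw [hw]; rfl)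
    · exact Or.inr (by rw [hw]; rfl)
  · rintro p q hp hq rfl
    exact ((htop p).mp hq).2 ((hbot p).mp hp)
  · intro p a hp
    exact step p a (Or.inl ((hbot p).mp hp))
  · intro p a hp
    exact step p a (Or.inr ((htop p).mp hp).1)
  · intro u
    refine ⟨fun h α => ?_, fun h α => ?_⟩
    · have h := (hbot _).mp h
      simp only [hB, repStep_foldl, dlang_rep] at h
      rw [cat_mem_dlang, h]
      exact Set.notMem_empty α
    · have h := ((htop _).mp h).1
      simp only [repStep_foldl, dlang_rep] at h
      rw [cat_mem_dlang, h]
      trivial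
  · exact Nat.card_le_card_of_injective _ Subtype.val_injective

/-! ### Optimal Büchi monitors and quotients -/

/-- For `L` monitorable and accepted by a DBA with total transition function and
`n` states: (i) there is a deterministic Büchi monitor for `L` with at most `n`
states; (ii) every deterministic Büchi monitor for `L` has at least as many
states as there are quotients `L(x)`. -/
theorem stmt13 {A : Type*} [Fintype A] (L : Set (ℕ → A)) (hmon : Monitorable L)
    (D : DBA A) (htotal : ∀ q a, (D.δ q a).isSome) (hD : D.Lang = L)
    (n : ℕ) (hn : Nat.card D.Q = n) :
    (∃ (M : Monitor A) (F : Set M.Q), M.IsMonitorFor L ∧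
        (DBA.mk M.Q M.finQ (fun q a => some (M.δ q a)) M.init F).Lang = L ∧
        Nat.card M.Q ≤ n) ∧
      (∀ (M : Monitor A) (F : Set M.Q), M.IsMonitorFor L →
        (DBA.mk M.Q M.finQ (fun q a => some (M.δ q a)) M.init F).Lang = L →
        (Set.range fun x : List A => quotientBy L x).ncard ≤ Nat.card M.Q) := by
  constructor
  · have hfin := D.finQ
    set d : D.Q → A → D.Q := fun q a => (D.δ q a).get (htotal q a) with hd
    have hLd : L = dlang d D.F D.init := by
      rw [← hD]
      exact lang_eq_dlang D d fun q a => by simp [hd]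
    -- The automaton restricted to its reachable states.
    let R := {q : D.Q // ∃ x : List A, x.foldl d D.init = q}
    let dR : R → A → R := fun q a => ⟨d q.1 a, by
      obtain ⟨x, hx⟩ := q.2
      exact ⟨x ++ [a], by simp [hx]⟩⟩
    let FR : Set R := {q | q.1 ∈ D.F}
    have run : ∀ (q : R) α n, (drun dR q α n).1 = drun d q.1 α n := by
      intro q α n
      induction n with
      | zero => rfl
      | succ n ih => rw [drun, drun, ← ih]
    have hlang : ∀ q : R, dlang dR FR q = dlang d D.F q.1 := by
      intro q
      ext α
      simp only [dlang, Set.mem_ofPred_eq, FR, run]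
    have hfold : ∀ (w : List A) (q : R), (w.foldl dR q).1 = w.foldl d q.1 := by
      intro w
      induction w with
      | nil => intro q; rfl
      | cons a w ih => intro q; exact ih (dR q a)
    obtain ⟨M, F', hM, hF', hcard⟩ := exists_monitor dR FR ⟨D.init, [], rfl⟩ (by
      rintro ⟨q, x, rfl⟩
      -- Follow the given monitor along `x` and then along a word `w` into a sink.
      obtain ⟨M, hM⟩ := hmon
      obtain ⟨w, hw⟩ := M.reach (x.foldl M.δ M.init)
      rw [← List.foldl_append] at hw
      refine ⟨w, ?_⟩
      have key : ∀ α, α ∈ dlang d D.F (w.foldl d (x.foldl d D.init)) ↔ cat (x ++ w) α ∈ L := by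
        intro α
        rw [hLd, cat_mem_dlang, List.foldl_append]
      unfold Triv
      rw [hlang, hfold]
      rcases hw with hw | hw
      · left
        ext α
        exact ⟨fun h => absurd ((key α).mp h) ((hM _).1 hw α), fun h => h.elim⟩
      · right
        ext α
        exact ⟨fun _ => trivial, fun _ => (key α).mpr ((hM _).2 hw α)⟩)
    rw [hlang, ← hLd] at hM hF'
    refine ⟨M, F', hM, ?_, ?_⟩
    · rw [← hF']
      exact lang_eq_dlang (DBA.mk M.Q M.finQ (fun q a => some (M.δ q a)) M.init F') M.δ
        fun _ _ => rfl
    · rw [← hn]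
      exact hcard.trans (Nat.card_le_card_of_injective _ Subtype.val_injective)
  · intro M F _ hL
    have hfin := M.finQ
    rw [lang_eq_dlang (DBA.mk M.Q M.finQ (fun q a => some (M.δ q a)) M.init F) M.δ
      fun _ _ => rfl] at hL
    have hsub : (Set.range fun x : List A => quotientBy L x) ⊆ Set.range (dlang M.δ F) := by
      rintro _ ⟨x, rfl⟩
      refine ⟨x.foldl M.δ M.init, ?_⟩
      ext α
      rw [← cat_mem_dlang, hL]
      rfl
    calc _ ≤ (Set.range (dlang M.δ F)).ncard := Set.ncard_le_ncard hsub (Set.finite_range _)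
      _ ≤ Nat.card M.Q := by
        rw [← Set.image_univ, ← Set.ncard_univ]
        exact Set.ncard_image_le Set.finite_univ
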